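/- For all positive integers n and k with k ≤ 2^n, v₂(H(2^n, k)) ≤ -n, where H(n,k) = Σ_{1 ≤ i₁ < ··· < i_k ≤ n} 1/(i₁···i_k) is the k-th elementary symmetric function of 1, 1/2, ..., 1/n. -/

import Mathlib

/-!
Write `c n k` for the coefficient of `X ^ k` in `f n = ∏_{i=1}^{2^n} (X + i)`. Since
`H(2^n, k) = c n k / (2^n)!` and `v₂((2^n)!) = 2^n - 1`, the claim is `v₂(c n k) ≤ 2^n - 1 - n`.

*Even `k`.* By induction on `n`, for every even `k` with `2 ≤ k ≤ 2^n` there is `e ≤ 2^n - 2n` with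
`v₂(c n k) ≤ e`, such that `v₂(c n a) + n * max 1 (a - k) > e` for all `a` (`even_bound`). To pass
from `n` to `n + 1`:

* If `k ≤ 2^n`, separate even and odd shifts to get `f (n+1) (2X) = 2^(2^n) * f n * g n` with
  `g n = ∏_{i<2^n} (2X + 2i + 1)`. Since `g n` is congruent to an odd constant modulo `2^n`, the
  term containing `c n k` dominates, and `e` is replaced by `e + 2^n - k`.
* If `2^n < k`, then `f (n+1) ≡ (X^4 + X^2)^(2^(n-1))` modulo `2^n`, so that `c (n+1) k` is
  congruent to a binomial coefficient `C(2^(n-1), j)` with `1 ≤ j ≤ 2^(n-1)`, whose valuation is at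
  most `n - 1`.

Both congruences follow by repeated squaring, because `f (n+1)` is the product of `f n` and its
translate by `2^n`, and likewise for `g`.

*Odd `k`.* Reflecting the roots gives `X * f n (X) = (X + 2^n) * f n (-X - 2^n)`. Comparing
coefficients of `X ^ (k+1)` yields
`2 * c n k = 2^n * ((k+2) * c n (k+1) + ∑_{a ≥ k+2} ± C(a+1, k+1) * 2^(n(a-k-1)) * c n a)`,
and by the even case the term with `c n (k+1)` dominates, so `v₂(c n k) ≤ e + n - 1`.
-/

open Polynomial Finset

/-- Unsigned Stirling number of the first kind: coefficient of `x^k` in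
`x(x+1)⋯(x+n-1)`. -/
noncomputable def sF (n k : ℕ) : ℕ :=
  (∏ i ∈ Finset.range n, (X + C i : Polynomial ℕ)).coeff k

/-- The `m`-th Stirling number of the first kind: coefficient of `x^k` in
`(x+m)(x+m+1)⋯(x+m+n-1)`. -/
noncomputable def sM (m n k : ℕ) : ℕ :=
  (∏ i ∈ Finset.range n, (X + C (m + i) : Polynomial ℕ)).coeff k

/-- `H n k`: the `k`-th elementary symmetric function of `1, 1/2, …, 1/n`. -/
def Hfun (n k : ℕ) : ℚ :=
  ((Finset.Icc 1 n).val.map (fun i => (1 : ℚ) / i)).esymm k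

/-- The polynomial `(X + 1)(X + 2)⋯(X + N)` over `ℤ`. -/
noncomputable def risingPoly (N : ℕ) : Polynomial ℤ :=
  ∏ i ∈ Finset.range N, (X + C ((i : ℤ) + 1))

/-- The polynomial `(2X + 1)(2X + 3)⋯(2X + 2N - 1)` over `ℤ`. -/
noncomputable def oddPoly (N : ℕ) : Polynomial ℤ :=
  ∏ i ∈ Finset.range N, (C 2 * X + C (2 * (i : ℤ) + 1))

lemma risingPoly_comp_two (N : ℕ) :
    (risingPoly (2 * N)).comp (C 2 * X) = C (2 ^ N) * (risingPoly N * oddPoly N) := by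
  induction N with
  | zero => simp [risingPoly, oddPoly]
  | succ N ih =>
    have h1 : risingPoly (2 * (N + 1)) = risingPoly (2 * N) *
        (X + C (2 * (N : ℤ) + 1)) * (X + C (2 * (N : ℤ) + 2)) := by
      rw [risingPoly, show 2 * (N + 1) = 2 * N + 1 + 1 by ring, Finset.prod_range_succ,
        Finset.prod_range_succ, ← risingPoly]
      push_cast
      ring_nf
    have h2 : risingPoly (N + 1) = risingPoly N * (X + C ((N : ℤ) + 1)) := by
      rw [risingPoly, Finset.prod_range_succ, ← risingPoly]
    have h3 : oddPoly (N + 1) = oddPoly N * (C 2 * X + C (2 * (N : ℤ) + 1)) := by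
      rw [oddPoly, Finset.prod_range_succ, ← oddPoly]
    rw [h1, h2, h3, mul_comp, mul_comp, ih]
    simp only [add_comp, X_comp, C_comp]
    simp only [C_add, C_mul, C_pow, C_1]
    have : (C (2 : ℤ) : ℤ[X]) = 2 := rfl
    rw [this]
    ring

lemma risingPoly_add (N : ℕ) :
    risingPoly (N + N) = risingPoly N * (risingPoly N).comp (X + C (N : ℤ)) := by
  rw [risingPoly, Finset.prod_range_add, ← risingPoly]
  congr 1
  rw [risingPoly, Polynomial.prod_comp]
  refine Finset.prod_congr rfl fun i _ => ?_
  simp only [add_comp, X_comp, C_comp]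
  push_cast
  simp only [C_add]
  ring

lemma oddPoly_add (N : ℕ) :
    oddPoly (N + N) = oddPoly N * (oddPoly N).comp (X + C (N : ℤ)) := by
  rw [oddPoly, Finset.prod_range_add, ← oddPoly]
  congr 1
  rw [oddPoly, Polynomial.prod_comp]
  refine Finset.prod_congr rfl fun i _ => ?_
  simp only [add_comp, X_comp, C_comp, mul_comp]
  push_cast
  simp only [C_add, C_mul]
  ring

lemma dvd_comp_sub (p : ℤ[X]) (r : ℤ) : C r ∣ p.comp (X + C r) - p := by
  have h := Polynomial.sub_dvd_eval_sub (X + C r) X (p.map C)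
  simpa [Polynomial.eval_map, Polynomial.comp, Polynomial.eval₂_C_X] using h

/-- Squaring improves a congruence modulo `2 ^ n` to one modulo `2 ^ (n + 1)`. One factor of `p ^ 2`
may be replaced by any `p'` congruent to `p` modulo `2 ^ (n + 1)`; here `p'` is a translate of `p`. -/
lemma sq_step {R : Type*} [CommRing R] {n : ℕ} (hn : 1 ≤ n) {p p' q : R}
    (h : (2 : R) ^ n ∣ p - q) (h' : (2 : R) ^ (n + 1) ∣ p' - p) :
    (2 : R) ^ (n + 1) ∣ p * p' - q ^ 2 := by
  obtain ⟨s, hs⟩ := h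
  obtain ⟨t, ht⟩ := h'
  obtain ⟨m, rfl⟩ : ∃ m, n = m + 1 := ⟨n - 1, by omega⟩
  have hp : p = q + 2 ^ (m + 1) * s := by linear_combination hs
  have hp' : p' = p + 2 ^ (m + 1 + 1) * t := by linear_combination ht
  refine ⟨q * s + 2 ^ m * s ^ 2 + p * t, ?_⟩
  rw [hp', hp]
  ring

lemma oddPoly_congr (n : ℕ) (hn : 1 ≤ n) :
    ∃ u : ℤ, Odd u ∧ (2 : ℤ[X]) ^ n ∣ oddPoly (2 ^ n) - C u := by
  induction n, hn using Nat.le_induction with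
  | base =>
    refine ⟨3, by decide, ⟨2 * X ^ 2 + 4 * X, ?_⟩⟩
    have h2 : (C (2 : ℤ) : ℤ[X]) = 2 := rfl
    have h3 : (C (3 : ℤ) : ℤ[X]) = 3 := rfl
    simp [oddPoly, Finset.prod_range_succ, h2, h3]
    ring_nf
  | succ n hn ih =>
    obtain ⟨u, hu, h⟩ := ih
    refine ⟨u ^ 2, hu.pow, ?_⟩
    rw [show 2 ^ (n + 1) = 2 ^ n + 2 ^ n by ring, oddPoly_add, C_pow]
    -- Translation by `2 ^ n` moves `2X` by `2 ^ (n + 1)`, which gains one factor of two.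
    refine sq_step hn h ?_
    have h1 : oddPoly (2 ^ n) = (∏ i ∈ Finset.range (2 ^ n),
        (X + C (2 * (i : ℤ) + 1))).comp (C 2 * X) := by
      rw [Polynomial.prod_comp, oddPoly]
      simp
    have h2 := dvd_comp_sub (∏ i ∈ Finset.range (2 ^ n), (X + C (2 * (i : ℤ) + 1)))
      (2 ^ (n + 1))
    obtain ⟨t, ht⟩ := h2
    refine ⟨t.comp (C 2 * X), ?_⟩
    have h3 := congrArg (fun p : ℤ[X] => p.comp (C 2 * X)) ht
    simp only [sub_comp, mul_comp, C_comp, comp_assoc, add_comp, X_comp] at h3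
    rw [h1, comp_assoc]
    simp only [mul_comp, C_comp, X_comp]
    have e : (C 2 * (X + C (((2 ^ n : ℕ) : ℤ))) : ℤ[X]) = C 2 * X + C (2 ^ (n + 1)) := by
      push_cast
      rw [mul_add, ← C_mul, pow_succ, mul_comm (2 ^ n : ℤ) 2]
    rw [e, h3]
    simp

lemma risingPoly_congr (n : ℕ) (hn : 1 ≤ n) :
    (2 : ℤ[X]) ^ n ∣ risingPoly (2 ^ (n + 1)) - (X ^ 4 + X ^ 2) ^ 2 ^ (n - 1) := by
  induction n, hn using Nat.le_induction with
  | base =>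
    refine ⟨5 * X ^ 3 + 17 * X ^ 2 + 25 * X + 12, ?_⟩
    simp [risingPoly, Finset.prod_range_succ]
    ring_nf
  | succ n hn ih =>
    rw [show 2 ^ (n + 1 + 1) = 2 ^ (n + 1) + 2 ^ (n + 1) by ring, risingPoly_add,
      show n + 1 - 1 = (n - 1) + 1 by omega, pow_succ 2 (n - 1), pow_mul]
    refine sq_step hn ih ?_
    have h := dvd_comp_sub (risingPoly (2 ^ (n + 1))) (2 ^ (n + 1))
    have e : (C ((2 : ℤ) ^ (n + 1)) : ℤ[X]) = 2 ^ (n + 1) := by simp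
    rw [e] at h
    simpa using h

lemma coeff_dvd_of_dvd {p : ℤ[X]} {n : ℕ} (h : (2 : ℤ[X]) ^ n ∣ p) (k : ℕ) :
    (2 : ℤ) ^ n ∣ p.coeff k := by
  have e : (C ((2 : ℤ) ^ n) : ℤ[X]) = 2 ^ n := by simp
  rw [← e, C_dvd_iff_dvd_coeff] at h
  exact h k

/-- In the upper half of the range, even-indexed coefficients reduce modulo `2 ^ n` to nonzero
binomial coefficients. -/
lemma top_not_dvd {n k : ℕ} (hn : 1 ≤ n) (hk : Even k) (h1 : 2 ^ n < k) (h2 : k ≤ 2 ^ (n + 1)) :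
    ¬ (2 : ℤ) ^ n ∣ (risingPoly (2 ^ (n + 1))).coeff k := by
  intro h
  obtain ⟨m, rfl⟩ : ∃ m, n = m + 1 := ⟨n - 1, by omega⟩
  have hk2 : 2 ∣ k := hk.two_dvd
  have p1 : 2 ^ (m + 1) = 2 * 2 ^ m := by ring
  have p2 : 2 ^ (m + 1 + 1) = 4 * 2 ^ m := by ring
  obtain ⟨j, rfl⟩ : ∃ j, k = 2 * j + 2 * 2 ^ m := ⟨k / 2 - 2 ^ m, by omega⟩
  have hc := coeff_dvd_of_dvd (risingPoly_congr (m + 1) hn) (2 * j + 2 * 2 ^ m)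
  rw [coeff_sub, dvd_sub_right h] at hc
  have e : ((X ^ 4 + X ^ 2 : ℤ[X]) ^ 2 ^ m) =
      (expand ℤ 2 ((X + C 1) ^ 2 ^ m)) * X ^ (2 * 2 ^ m) := by
    simp only [map_pow, map_add, expand_X, expand_C]
    rw [pow_mul, ← mul_pow]
    congr 1
    simp only [C_1]
    ring
  rw [Nat.add_sub_cancel, e, coeff_mul_X_pow, mul_comm 2 j, coeff_expand_mul (by norm_num),
    coeff_X_add_C_pow, one_pow, one_mul] at hc
  have hc' : 2 ^ (m + 1) ∣ (2 ^ m).choose j := by exact_mod_cast hc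
  have hj : j ≤ 2 ^ m := by omega
  have h3 := (Nat.prime_two.pow_dvd_iff_le_factorization
    (Nat.choose_pos hj).ne').mp hc'
  have h4 := Nat.factorization_choose_le_log (p := 2) (n := 2 ^ m) (k := j)
  rw [Nat.log_pow (by norm_num)] at h4
  omega

/-- Coefficientwise form of `risingPoly_comp_two`. -/
lemma coeff_rec (n a : ℕ) :
    (risingPoly (2 ^ (n + 1))).coeff a * 2 ^ a = 2 ^ 2 ^ n *
      ∑ x ∈ Finset.HasAntidiagonal.antidiagonal a,
        (risingPoly (2 ^ n)).coeff x.1 * (oddPoly (2 ^ n)).coeff x.2 := by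
  have h := congrArg (fun p : ℤ[X] => p.coeff a) (risingPoly_comp_two (2 ^ n))
  beta_reduce at h
  rw [comp_C_mul_X_coeff, coeff_C_mul, coeff_mul] at h
  rw [pow_succ, mul_comm (2 ^ n) 2]
  exact h

/-- The inductive statement for even indices: `e` bounds the valuation of the `k`-th coefficient
from above, and every other coefficient has valuation exceeding `e - n * max 1 (a - k)`. The
subtraction is truncated, so the correction is `n` for `a ≤ k + 1`. -/
lemma even_bound (n : ℕ) (hn : 1 ≤ n) : ∀ k, Even k → 2 ≤ k → k ≤ 2 ^ n →
    ∃ e : ℕ, e + 2 * n ≤ 2 ^ n ∧ ¬ (2 : ℤ) ^ (e + 1) ∣ (risingPoly (2 ^ n)).coeff k ∧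
      ∀ a, (2 : ℤ) ^ (e + 1) ∣ (risingPoly (2 ^ n)).coeff a * 2 ^ (n * max 1 (a - k)) := by
  induction n, hn using Nat.le_induction with
  | base =>
    intro k _ h2 h2'
    obtain rfl : k = 2 := by omega
    refine ⟨0, by norm_num, ?_, fun a => ?_⟩
    · have : risingPoly (2 ^ 1) = X ^ 2 + C 3 * X + C 2 := by
        have h2 : (C (2 : ℤ) : ℤ[X]) = 2 := rfl
        have h3 : (C (3 : ℤ) : ℤ[X]) = 3 := rfl
        simp [risingPoly, Finset.prod_range_succ, h2, h3]
        ring_nf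
      rw [this]
      simp [coeff_X, coeff_X_pow]
    · exact Dvd.dvd.mul_left (pow_dvd_pow _ (by simp)) _
  | succ n hn ih =>
    intro k hk h2 hk'
    have pn : 2 ^ (n + 1) = 2 * 2 ^ n := by ring
    rcases lt_or_ge (2 ^ n) k with hlt | hle
    · refine ⟨n - 1, ?_, ?_, fun a => ?_⟩
      · have : ∀ m, 1 ≤ m → 3 * m + 1 ≤ 2 ^ (m + 1) := by
          intro m hm
          induction m, hm using Nat.le_induction with
          | base => norm_num
          | succ m hm ih => rw [pow_succ]; omega
        have := this n hn
        omega
      · rw [Nat.sub_add_cancel hn]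
        exact top_not_dvd hn hk hlt hk'
      · refine Dvd.dvd.mul_left (pow_dvd_pow _ ?_) _
        have : (n + 1) * 1 ≤ (n + 1) * max 1 (a - k) := Nat.mul_le_mul_left _ (le_max_left _ _)
        omega
    · obtain ⟨e, he, hnd, hd⟩ := ih k hk h2 hle
      refine ⟨e + (2 ^ n - k), by omega, ?_, fun a => ?_⟩
      · intro hdiv
        obtain ⟨u, hu, hc⟩ := oddPoly_congr n hn
        have h3 : (2 : ℤ) ^ 2 ^ n * 2 ^ (e + 1) ∣
            (risingPoly (2 ^ (n + 1))).coeff k * 2 ^ k := by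
          rw [← pow_add, show 2 ^ n + (e + 1) = e + (2 ^ n - k) + 1 + k by omega, pow_add]
          exact mul_dvd_mul_right hdiv _
        rw [coeff_rec, mul_dvd_mul_iff_left (by positivity)] at h3
        -- Modulo `2 ^ (e + 1)` the sum agrees with that for the constant polynomial `u`.
        have h4 : (2 : ℤ) ^ (e + 1) ∣ ∑ x ∈ Finset.HasAntidiagonal.antidiagonal k,
            (risingPoly (2 ^ n)).coeff x.1 * (oddPoly (2 ^ n) - C u).coeff x.2 := by
          refine Finset.dvd_sum fun x hx => ?_
          have hx' := Finset.HasAntidiagonal.mem_antidiagonal.mp hx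
          have h5 := hd x.1
          rw [show max 1 (x.1 - k) = 1 by omega, mul_one] at h5
          exact h5.trans (mul_dvd_mul_left _ (coeff_dvd_of_dvd hc x.2))
        have h5 : ∑ x ∈ Finset.HasAntidiagonal.antidiagonal k,
            (risingPoly (2 ^ n)).coeff x.1 * (oddPoly (2 ^ n) - C u).coeff x.2 =
            ∑ x ∈ Finset.HasAntidiagonal.antidiagonal k,
              (risingPoly (2 ^ n)).coeff x.1 * (oddPoly (2 ^ n)).coeff x.2
            - (risingPoly (2 ^ n)).coeff k * u := by
          rw [← coeff_mul, ← coeff_mul, mul_sub, coeff_sub, coeff_mul_C]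
        rw [h5, dvd_sub_right h3] at h4
        have hcop : IsCoprime ((2 : ℤ) ^ (e + 1)) u :=
          (Int.isCoprime_two_left.mpr hu).pow_left
        exact hnd (hcop.dvd_of_dvd_mul_right h4)
      · have h3 : (2 : ℤ) ^ (e + (2 ^ n - k) + 1) * 2 ^ a ∣
            (risingPoly (2 ^ (n + 1))).coeff a * 2 ^ ((n + 1) * max 1 (a - k)) * 2 ^ a := by
          rw [mul_right_comm, coeff_rec, mul_assoc, Finset.sum_mul, Finset.mul_sum]
          refine Finset.dvd_sum fun x hx => ?_
          have hx' := Finset.HasAntidiagonal.mem_antidiagonal.mp hx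
          have h5 : (2 : ℤ) ^ (e + 1) ∣
              (risingPoly (2 ^ n)).coeff x.1 * 2 ^ (n * max 1 (a - k)) := by
            refine (hd x.1).trans (mul_dvd_mul_left _ (pow_dvd_pow _ ?_))
            exact Nat.mul_le_mul_left _ (by omega)
          have h6 : (2 : ℤ) ^ (e + (2 ^ n - k) + 1) * 2 ^ a ∣
              2 ^ 2 ^ n * (2 ^ (e + 1) * 2 ^ (max 1 (a - k))) := by
            rw [← pow_add, ← pow_add, ← pow_add]
            exact pow_dvd_pow _ (by omega)
          refine h6.trans (mul_dvd_mul_left _ ?_)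
          rw [add_mul n 1, one_mul, pow_add 2 (n * _), mul_right_comm, ← mul_assoc]
          exact (mul_dvd_mul_right h5 _).trans (Dvd.intro _ rfl)
        exact (mul_dvd_mul_iff_right (by positivity)).mp h3

/-- Reflection of the roots `-1, …, -N` in the point `-N / 2`, for even `N`. -/
lemma risingPoly_reflect {N : ℕ} (hN : Even N) :
    X * risingPoly N = (X + C (N : ℤ)) * (risingPoly N).comp (-(X + C (N : ℤ))) := by
  have h1 : (risingPoly N).comp (-(X + C (N : ℤ))) =
      ∏ i ∈ Finset.range N, (X + C (i : ℤ)) := by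
    rw [risingPoly, Polynomial.prod_comp,
      ← Finset.prod_range_reflect (fun i : ℕ => (X + C (i : ℤ) : ℤ[X]))]
    have h2 : ∀ i ∈ Finset.range N,
        (X + C ((i : ℤ) + 1) : ℤ[X]).comp (-(X + C (N : ℤ))) =
          (-1) * (X + C ((N - 1 - i : ℕ) : ℤ)) := by
      intro i hi
      have hi' := Finset.mem_range.mp hi
      rw [Nat.sub_sub, Nat.cast_sub (by omega)]
      simp only [add_comp, X_comp, C_comp]
      push_cast
      simp only [C_add, C_sub]
      ring
    rw [Finset.prod_congr rfl h2, Finset.prod_mul_distrib]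
    simp [hN.neg_one_pow]
  rw [h1]
  have h3 := Finset.prod_range_succ (fun i : ℕ => (X + C (i : ℤ) : ℤ[X])) N
  have h4 := Finset.prod_range_succ' (fun i : ℕ => (X + C (i : ℤ) : ℤ[X])) N
  rw [mul_comm (X + C (N : ℤ)), ← h3, h4, risingPoly]
  simp [mul_comm]

/-- Coefficientwise form of `risingPoly_reflect`. -/
lemma coeff_reflect {N : ℕ} (hN : Even N) (k : ℕ) :
    (risingPoly N).coeff k = ∑ a ∈ Finset.range ((risingPoly N).natDegree + 1),
      (risingPoly N).coeff a * (-1) ^ a * ((N : ℤ) ^ (a - k) * (a + 1).choose (k + 1)) := by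
  have h := congrArg (fun p : ℤ[X] => p.coeff (k + 1)) (risingPoly_reflect hN)
  simp only [coeff_X_mul] at h
  rw [h, Polynomial.comp, Polynomial.eval₂_eq_sum_range, Finset.mul_sum, finsetSum_coeff]
  refine Finset.sum_congr rfl fun a _ => ?_
  have e : (X + C (N : ℤ)) * (C ((risingPoly N).coeff a) * (-(X + C (N : ℤ))) ^ a) =
      C ((risingPoly N).coeff a * (-1) ^ a) * (X + C (N : ℤ)) ^ (a + 1) := by
    rw [neg_pow, C_mul, C_pow, C_neg, C_1]
    ring
  rw [e, coeff_C_mul, coeff_X_add_C_pow, Nat.add_sub_add_right]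

lemma odd_bound {n k : ℕ} (hn : 1 ≤ n) (hk : Odd k) (hk' : k ≤ 2 ^ n) :
    ¬ (2 : ℤ) ^ (2 ^ n - n) ∣ (risingPoly (2 ^ n)).coeff k := by
  intro hdiv
  have hN : Even (2 ^ n) := (Nat.even_pow.mpr ⟨even_two, by omega⟩)
  have hk1 : k + 1 ≤ 2 ^ n := by
    rcases hk'.lt_or_eq with h | h
    · exact h
    · exact absurd (h ▸ hN) (Nat.not_even_iff_odd.mpr hk)
  obtain ⟨e, he, hnd, hd⟩ := even_bound n hn (k + 1) hk.add_one
    (by have := hk.pos; omega) hk1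
  have hs := coeff_reflect hN k
  set c := (risingPoly (2 ^ n)).coeff with hcdef
  set D := (risingPoly (2 ^ n)).natDegree + 1 with hD
  have hD0 : ∀ a, D ≤ a → c a = 0 := fun a ha => coeff_eq_zero_of_natDegree_lt (by omega)
  -- The range is enlarged so that it certainly contains `k` and `k + 1`.
  have hs' : c k = ∑ a ∈ Finset.range (k + 2 + D),
      c a * (-1) ^ a * (((2 ^ n : ℕ) : ℤ) ^ (a - k) * (a + 1).choose (k + 1)) := by
    rw [hs]
    refine Finset.sum_subset (Finset.range_mono (by omega)) fun a _ ha => ?_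
    rw [hD0 a (by simpa using ha)]
    simp
  rw [Finset.sum_range_add, Finset.sum_range_succ, Finset.sum_range_succ] at hs'
  have hz : ∑ a ∈ Finset.range k,
      c a * (-1) ^ a * (((2 ^ n : ℕ) : ℤ) ^ (a - k) * (a + 1).choose (k + 1)) = 0 := by
    refine Finset.sum_eq_zero fun a ha => ?_
    have := Finset.mem_range.mp ha
    rw [Nat.choose_eq_zero_of_lt (by omega)]
    simp
  rw [hz, hk.neg_one_pow, hk.add_one.neg_one_pow, Nat.choose_self,
    Nat.choose_succ_self_right (k + 1), Nat.sub_self, Nat.add_sub_cancel_left] at hs'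
  have ht : (2 : ℤ) ^ (n + (e + 1)) ∣ ∑ a ∈ Finset.range D,
      c (k + 2 + a) * (-1) ^ (k + 2 + a) *
        (((2 ^ n : ℕ) : ℤ) ^ (k + 2 + a - k) * (k + 2 + a + 1).choose (k + 1)) := by
    refine Finset.dvd_sum fun a _ => ?_
    have h5 := hd (k + 2 + a)
    rw [show max 1 (k + 2 + a - (k + 1)) = a + 1 by omega] at h5
    obtain ⟨t, ht⟩ := h5
    refine ⟨t * (-1) ^ (k + 2 + a) * (k + 2 + a + 1).choose (k + 1), ?_⟩
    rw [show k + 2 + a - k = (a + 1) + 1 by omega]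
    push_cast
    rw [← pow_mul, show n * (a + 1 + 1) = n * (a + 1) + n by ring, pow_add 2 _ n, pow_add 2 n]
    linear_combination ((-1) ^ (k + 2 + a) * ((k + 2 + a + 1).choose (k + 1) : ℤ) * 2 ^ n) * ht
  have h2c : (2 : ℤ) ^ (n + (e + 1)) ∣ 2 * c k := by
    have : (2 : ℤ) ^ (n + (e + 1)) ∣ 2 ^ (2 ^ n - n + 1) := pow_dvd_pow _ (by omega)
    refine this.trans ?_
    rw [pow_succ, mul_comm]
    exact mul_dvd_mul_left _ hdiv
  have hm : (2 : ℤ) ^ n * 2 ^ (e + 1) ∣ 2 ^ n * (c (k + 1) * ((k : ℤ) + 2)) := by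
    rw [← pow_add]
    have hsub := dvd_sub h2c ht
    push_cast at hs' hsub
    have heq : (2 : ℤ) ^ n * (c (k + 1) * ((k : ℤ) + 2)) = 2 * c k - ∑ a ∈ Finset.range D,
        c (k + 2 + a) * (-1) ^ (k + 2 + a) *
          (((2 : ℤ) ^ n) ^ (k + 2 + a - k) * (k + 2 + a + 1).choose (k + 1)) := by
      linear_combination (-1) * hs'
    rw [heq]
    exact hsub
  rw [mul_dvd_mul_iff_left (by positivity)] at hm
  have hodd : Odd ((k : ℤ) + 2) := by
    have : Odd (k : ℤ) := by exact_mod_cast hk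
    exact this.add_even even_two
  have hcop : IsCoprime ((2 : ℤ) ^ (e + 1)) ((k : ℤ) + 2) :=
    (Int.isCoprime_two_left.mpr hodd).pow_left
  exact hnd (hcop.dvd_of_dvd_mul_right hm)

lemma coeff_not_dvd {n k : ℕ} (hn : 1 ≤ n) (hk : 1 ≤ k) (hk' : k ≤ 2 ^ n) :
    ¬ (2 : ℤ) ^ (2 ^ n - n) ∣ (risingPoly (2 ^ n)).coeff k := by
  rcases Nat.even_or_odd k with h | h
  · obtain ⟨e, he, hnd, -⟩ := even_bound n hn k h
      (by have := h.two_dvd; omega) hk'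
    exact fun hdiv => hnd ((pow_dvd_pow _ (by omega)).trans hdiv)
  · exact odd_bound hn h hk'

lemma Hfun_eq (N k : ℕ) :
    Hfun N k = ((Finset.Icc 1 N).val.map (fun i : ℕ => (1 : ℚ) / (i : ℚ))).esymm k := by
  -- In `Hfun` the bound variable is rational, so the index multiset itself is cast to `ℚ`, and this
  -- cast elaborates to a `bind` in the `Multiset` monad.
  simp [Hfun, Multiset.bind_def, Multiset.pure_def, Multiset.map_map]

lemma Hfun_succ (N k : ℕ) :
    Hfun (N + 1) (k + 1) = Hfun N (k + 1) + 1 / ((N : ℚ) + 1) * Hfun N k := by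
  have h : Finset.Icc 1 (N + 1) = insert (N + 1) (Finset.Icc 1 N) := by
    ext i; simp only [Finset.mem_Icc, Finset.mem_insert]; omega
  rw [Hfun_eq, h, Finset.insert_val_of_notMem (by simp), Multiset.map_cons, Multiset.esymm,
    Multiset.powersetCard_cons, Multiset.map_add, Multiset.sum_add, Multiset.map_map]
  simp only [Function.comp_def, Multiset.prod_cons, Multiset.sum_map_mul_left]
  simp [Hfun_eq, Multiset.esymm]

lemma factorial_mul_Hfun (N k : ℕ) :
    (N.factorial : ℚ) * Hfun N k = ((risingPoly N).coeff k : ℤ) := by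
  induction N generalizing k with
  | zero =>
    cases k with
    | zero => simp [Hfun, risingPoly, Multiset.esymm]
    | succ k =>
      simp [Hfun_eq, risingPoly, Multiset.esymm, Multiset.powersetCard_zero_right, coeff_one]
  | succ N ih =>
    have h2 : risingPoly (N + 1) = risingPoly N * (X + C ((N : ℤ) + 1)) := by
      rw [risingPoly, Finset.prod_range_succ, ← risingPoly]
    have hN : ((N : ℚ) + 1) ≠ 0 := by positivity
    cases k with
    | zero =>
      have h0 := ih 0
      have e : ∀ M, Hfun M 0 = 1 := fun M => by simp [Hfun, Multiset.esymm]
      rw [e] at h0 ⊢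
      rw [h2, mul_coeff_zero]
      simp only [coeff_add, coeff_X_zero, coeff_C_zero, Int.cast_mul]
      rw [← h0, Nat.factorial_succ]
      push_cast
      ring
    | succ k =>
      rw [h2, mul_add, coeff_add, coeff_mul_X, coeff_mul_C, Hfun_succ, Nat.factorial_succ]
      push_cast
      rw [← ih, ← ih]
      field_simp
      ring

lemma padicValNat_two_pow_factorial (n : ℕ) :
    padicValNat 2 (2 ^ n).factorial + 1 = 2 ^ n := by
  induction n with
  | zero => simp
  | succ n ih =>
    rw [pow_succ, mul_comm, padicValNat_factorial_mul]
    omega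

theorem stmt4 (n k : ℕ) (hn : 1 ≤ n) (hk : 1 ≤ k) (hk' : k ≤ 2 ^ n) :
    padicValRat 2 (Hfun (2 ^ n) k) ≤ -(n : ℤ) := by
  have hnd := coeff_not_dvd hn hk hk'
  have hH := factorial_mul_Hfun (2 ^ n) k
  set c := (risingPoly (2 ^ n)).coeff k
  have hc0 : c ≠ 0 := fun h => hnd (h ▸ dvd_zero _)
  have hF : ((2 ^ n).factorial : ℚ) ≠ 0 := by positivity
  have hH' : Hfun (2 ^ n) k = (c : ℚ) / ((2 ^ n).factorial : ℚ) := by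
    rw [← hH]
    field_simp
  have hv := padicValNat_two_pow_factorial n
  rw [hH', padicValRat.div (by exact_mod_cast hc0) hF, padicValRat.of_int, padicValRat.of_nat]
  have hlt : padicValInt 2 c < 2 ^ n - n := by
    by_contra! hge
    refine hnd ((pow_dvd_pow _ hge).trans ?_)
    exact_mod_cast padicValInt_dvd (p := 2) c
  have : n < 2 ^ n := Nat.lt_two_pow_self
  omega
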